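/- Let R_1, …, R_n (n ≥ 1) be a side-attachment sequence of axis-parallel rectangles. Then the rectangular tiling (R_1,…,R_n) of U_n = R_1 ∪ ⋯ ∪ R_n is area-universal: every assignment of positive areas to the rectangles can be realized by a weakly equivalent rectangular tiling. -/

import Mathlib

/-! Each step of a side-attachment sequence glues a new rectangle along one full side of the current
bounding rectangle (`exists_attach`): two rectangles with disjoint interiors whose union is a
rectangle are separated by a line, and looking at the corners of the union forces them to share a
full side. Gluing along, say, the right side makes the new rectangle adjacent exactly to the
rectangles meeting that side, so the contact relations of the enlarged tiling are determined by
those of the old one together with the chosen side. Hence a realization of the prescribed areas is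
built greedily: given one for the first rectangles, attach on the same side of its bounding
rectangle a rectangle of the right thickness (`exists_attach_area`, `Realizes.insert`).

Throughout, the contact relations are replaced by equivalent (in)equalities between coordinates. -/

open Set

/-- An axis-parallel rectangle `[x1,x2] × [y1,y2]` with `x1 < x2` and `y1 < y2`. -/
structure Rect where
  x1 : ℝ
  x2 : ℝ
  y1 : ℝ
  y2 : ℝ
  hx : x1 < x2
  hy : y1 < y2

namespace Rect

/-- The rectangle as a subset of the plane. -/
def toSet (R : Rect) : Set (ℝ × ℝ) := Set.Icc R.x1 R.x2 ×ˢ Set.Icc R.y1 R.y2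

/-- The area of the rectangle. -/
noncomputable def area (R : Rect) : ℝ := (R.x2 - R.x1) * (R.y2 - R.y1)

end Rect

/-- Vertical closed segment `{x} × [c,d]`. -/
def vseg (x c d : ℝ) : Set (ℝ × ℝ) := ({x} : Set ℝ) ×ˢ Set.Icc c d

/-- Horizontal closed segment `[a,b] × {y}`. -/
def hseg (a b y : ℝ) : Set (ℝ × ℝ) := Set.Icc a b ×ˢ ({y} : Set ℝ)

/-- Relative interior of a vertical segment. -/
def vsegOpen (x c d : ℝ) : Set (ℝ × ℝ) := ({x} : Set ℝ) ×ˢ Set.Ioo c d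

/-- Relative interior of a horizontal segment. -/
def hsegOpen (a b y : ℝ) : Set (ℝ × ℝ) := Set.Ioo a b ×ˢ ({y} : Set ℝ)

/-- `S` is one of the four sides of the rectangle `R`. -/
def Rect.IsSide (R : Rect) (S : Set (ℝ × ℝ)) : Prop :=
  S = vseg R.x1 R.y1 R.y2 ∨ S = vseg R.x2 R.y1 R.y2 ∨
  S = hseg R.x1 R.x2 R.y1 ∨ S = hseg R.x1 R.x2 R.y2

/-- A rectangular tiling: a finite family of axis-parallel rectangles with pairwise
disjoint interiors whose union is an axis-parallel rectangle `F`. -/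
structure Tiling (I : Type*) [Fintype I] where
  R : I → Rect
  F : Rect
  disj : Pairwise fun i j => interior ((R i).toSet) ∩ interior ((R j).toSet) = ∅
  union : (⋃ i, (R i).toSet) = F.toSet

variable {I : Type*} [Fintype I]

/-- An internal line segment of a tiling: a horizontal or vertical closed segment of
positive length contained in the union of the boundaries of the rectangles, whose
relative interior lies in the topological interior of the bounding rectangle. -/
def IsInternalSeg (T : Tiling I) (S : Set (ℝ × ℝ)) : Prop :=
  (∃ x c d : ℝ, c < d ∧ S = vseg x c d ∧
      S ⊆ (⋃ i, frontier ((T.R i).toSet)) ∧ vsegOpen x c d ⊆ interior T.F.toSet) ∨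
  (∃ a b y : ℝ, a < b ∧ S = hseg a b y ∧
      S ⊆ (⋃ i, frontier ((T.R i).toSet)) ∧ hsegOpen a b y ⊆ interior T.F.toSet)

/-- A maximal internal line segment: an internal segment not properly contained in
any other internal segment. -/
def IsMaxInternalSeg (T : Tiling I) (S : Set (ℝ × ℝ)) : Prop :=
  IsInternalSeg T S ∧ ∀ S', IsInternalSeg T S' → S ⊆ S' → S' = S

/-- `A ∩ B` is a vertical segment of positive length with `A` lying to the left of `B`. -/
def LeftAdj (A B : Rect) : Prop :=
  A.x2 = B.x1 ∧ ∃ c d : ℝ, c < d ∧ A.toSet ∩ B.toSet = vseg A.x2 c d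

/-- `A ∩ B` is a horizontal segment of positive length with `A` lying below `B`. -/
def BelowAdj (A B : Rect) : Prop :=
  A.y2 = B.y1 ∧ ∃ a b : ℝ, a < b ∧ A.toSet ∩ B.toSet = hseg a b A.y2

/-- `A` meets the left side of `F` in a segment of positive length. -/
def MeetsLeftSide (A F : Rect) : Prop :=
  ∃ c d : ℝ, c < d ∧ A.toSet ∩ vseg F.x1 F.y1 F.y2 = vseg F.x1 c d

/-- `A` meets the right side of `F` in a segment of positive length. -/
def MeetsRightSide (A F : Rect) : Prop :=
  ∃ c d : ℝ, c < d ∧ A.toSet ∩ vseg F.x2 F.y1 F.y2 = vseg F.x2 c d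

/-- `A` meets the bottom side of `F` in a segment of positive length. -/
def MeetsBottomSide (A F : Rect) : Prop :=
  ∃ a b : ℝ, a < b ∧ A.toSet ∩ hseg F.x1 F.x2 F.y1 = hseg a b F.y1

/-- `A` meets the top side of `F` in a segment of positive length. -/
def MeetsTopSide (A F : Rect) : Prop :=
  ∃ a b : ℝ, a < b ∧ A.toSet ∩ hseg F.x1 F.x2 F.y2 = hseg a b F.y2

/-- Two tilings indexed by the same finite set are weakly equivalent. -/
def WeakEquiv (T T' : Tiling I) : Prop :=
  (∀ i j : I, LeftAdj (T.R i) (T.R j) ↔ LeftAdj (T'.R i) (T'.R j)) ∧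
  (∀ i j : I, BelowAdj (T.R i) (T.R j) ↔ BelowAdj (T'.R i) (T'.R j)) ∧
  (∀ i : I, MeetsLeftSide (T.R i) T.F ↔ MeetsLeftSide (T'.R i) T'.F) ∧
  (∀ i : I, MeetsRightSide (T.R i) T.F ↔ MeetsRightSide (T'.R i) T'.F) ∧
  (∀ i : I, MeetsTopSide (T.R i) T.F ↔ MeetsTopSide (T'.R i) T'.F) ∧
  (∀ i : I, MeetsBottomSide (T.R i) T.F ↔ MeetsBottomSide (T'.R i) T'.F)

/-- A tiling is area-universal if every assignment of positive areas to the rectangles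
is realized by a weakly equivalent tiling. -/
def AreaUniversal (T : Tiling I) : Prop :=
  ∀ w : I → ℝ, (∀ i, 0 < w i) → ∃ T' : Tiling I, WeakEquiv T T' ∧ ∀ i, (T'.R i).area = w i

/-- A tiling is generic if no point belongs to four or more of the rectangles. -/
def Generic (T : Tiling I) : Prop :=
  ∀ p : ℝ × ℝ, ∀ s : Finset I, (∀ i ∈ s, p ∈ (T.R i).toSet) → s.card ≤ 3

/-- A side-attachment sequence: rectangles with pairwise disjoint interiors such that
every partial union `U_j = R_0 ∪ ⋯ ∪ R_j` is an axis-parallel rectangle. -/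
def SideAttachSeq {n : ℕ} (R : Fin n → Rect) : Prop :=
  (Pairwise fun i j => interior ((R i).toSet) ∩ interior ((R j).toSet) = ∅) ∧
  ∀ j : Fin n, ∃ U : Rect, (⋃ i ∈ Set.Iic j, (R i).toSet) = U.toSet

/-! ### Coordinate descriptions -/

/-- Containment of rectangles, in coordinates. -/
def Rect.Sub (A F : Rect) : Prop := F.x1 ≤ A.x1 ∧ A.x2 ≤ F.x2 ∧ F.y1 ≤ A.y1 ∧ A.y2 ≤ F.y2

/-- Two rectangles are separated by a horizontal or vertical line. -/
def Rect.Sep (A B : Rect) : Prop :=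
  A.x2 ≤ B.x1 ∨ B.x2 ≤ A.x1 ∨ A.y2 ≤ B.y1 ∨ B.y2 ≤ A.y1

theorem Rect.mem_toSet (A : Rect) (x y : ℝ) :
    (x, y) ∈ A.toSet ↔ (A.x1 ≤ x ∧ x ≤ A.x2) ∧ A.y1 ≤ y ∧ y ≤ A.y2 := by
  exact Iff.rfl

theorem Rect.sub_iff (A F : Rect) : A.toSet ⊆ F.toSet ↔ A.Sub F := by
  have hx := A.hx
  have hy := A.hy
  constructor
  · intro h
    have h1 := (F.mem_toSet _ _).1 (h ((A.mem_toSet A.x1 A.y1).2 (by grind)))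
    have h2 := (F.mem_toSet _ _).1 (h ((A.mem_toSet A.x2 A.y2).2 (by grind)))
    exact ⟨h1.1.1, h2.1.2, h1.2.1, h2.2.2⟩
  · rintro ⟨h1, h2, h3, h4⟩ ⟨x, y⟩ h
    rw [Rect.mem_toSet] at h ⊢
    grind

theorem Rect.interior_toSet (A : Rect) :
    interior A.toSet = Ioo A.x1 A.x2 ×ˢ Ioo A.y1 A.y2 := by
  rw [Rect.toSet, interior_prod_eq, interior_Icc, interior_Icc]

theorem Rect.sep_iff (A B : Rect) :
    interior A.toSet ∩ interior B.toSet = ∅ ↔ A.Sep B := by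
  have := A.hx
  have := A.hy
  have := B.hx
  have := B.hy
  rw [A.interior_toSet, B.interior_toSet, Set.prod_inter_prod, Set.prod_eq_empty_iff,
    Set.Ioo_inter_Ioo, Set.Ioo_inter_Ioo, Set.Ioo_eq_empty_iff, Set.Ioo_eq_empty_iff]
  simp only [lt_inf_iff, sup_lt_iff, Rect.Sep]
  grind

theorem leftAdj_iff (A B : Rect) :
    LeftAdj A B ↔ A.x2 = B.x1 ∧ A.y1 < B.y2 ∧ B.y1 < A.y2 := by
  have := A.hx
  have := A.hy
  have := B.hx
  have := B.hy
  refine and_congr_right fun e => ?_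
  constructor
  · rintro ⟨c, d, hcd, h⟩
    have hc : (A.x2, c) ∈ A.toSet ∩ B.toSet := by rw [h]; simp [vseg, hcd.le]
    have hd : (A.x2, d) ∈ A.toSet ∩ B.toSet := by rw [h]; simp [vseg, hcd.le]
    rw [Set.mem_inter_iff, Rect.mem_toSet, Rect.mem_toSet] at hc hd
    grind
  · rintro ⟨h1, h2⟩
    refine ⟨max A.y1 B.y1, min A.y2 B.y2, by grind, ?_⟩
    ext ⟨x, y⟩
    rw [Set.mem_inter_iff, Rect.mem_toSet, Rect.mem_toSet]
    simp only [vseg, Set.mem_prod, Set.mem_singleton_iff, Set.mem_Icc, max_le_iff, le_min_iff]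
    grind

theorem belowAdj_iff (A B : Rect) :
    BelowAdj A B ↔ A.y2 = B.y1 ∧ A.x1 < B.x2 ∧ B.x1 < A.x2 := by
  have := A.hx
  have := A.hy
  have := B.hx
  have := B.hy
  refine and_congr_right fun e => ?_
  constructor
  · rintro ⟨c, d, hcd, h⟩
    have hc : (c, A.y2) ∈ A.toSet ∩ B.toSet := by rw [h]; simp [hseg, hcd.le]
    have hd : (d, A.y2) ∈ A.toSet ∩ B.toSet := by rw [h]; simp [hseg, hcd.le]
    rw [Set.mem_inter_iff, Rect.mem_toSet, Rect.mem_toSet] at hc hd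
    grind
  · rintro ⟨h1, h2⟩
    refine ⟨max A.x1 B.x1, min A.x2 B.x2, by grind, ?_⟩
    ext ⟨x, y⟩
    rw [Set.mem_inter_iff, Rect.mem_toSet, Rect.mem_toSet]
    simp only [hseg, Set.mem_prod, Set.mem_singleton_iff, Set.mem_Icc, max_le_iff, le_min_iff]
    grind

/-- A subrectangle `A` of `F` meets the vertical chord of `F` at abscissa `z` in a segment of
positive length as soon as it meets it at all. -/
theorem meets_vseg_iff {A F : Rect} (h : A.Sub F) (z : ℝ) :
    (∃ c d : ℝ, c < d ∧ A.toSet ∩ vseg z F.y1 F.y2 = vseg z c d) ↔ A.x1 ≤ z ∧ z ≤ A.x2 := by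
  have := A.hy
  obtain ⟨h1, h2, h3, h4⟩ := h
  constructor
  · rintro ⟨c, d, hcd, h⟩
    have hc : (z, c) ∈ A.toSet ∩ vseg z F.y1 F.y2 := by rw [h]; simp [vseg, hcd.le]
    exact ((A.mem_toSet _ _).1 hc.1).1
  · intro hz
    refine ⟨A.y1, A.y2, A.hy, ?_⟩
    ext ⟨x, y⟩
    rw [Set.mem_inter_iff, Rect.mem_toSet]
    simp only [vseg, Set.mem_prod, Set.mem_singleton_iff, Set.mem_Icc]
    grind

theorem meets_hseg_iff {A F : Rect} (h : A.Sub F) (z : ℝ) :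
    (∃ c d : ℝ, c < d ∧ A.toSet ∩ hseg F.x1 F.x2 z = hseg c d z) ↔ A.y1 ≤ z ∧ z ≤ A.y2 := by
  have := A.hx
  obtain ⟨h1, h2, h3, h4⟩ := h
  constructor
  · rintro ⟨c, d, hcd, h⟩
    have hc : (c, z) ∈ A.toSet ∩ hseg F.x1 F.x2 z := by rw [h]; simp [hseg, hcd.le]
    exact ((A.mem_toSet _ _).1 hc.1).2
  · intro hz
    refine ⟨A.x1, A.x2, A.hx, ?_⟩
    ext ⟨x, y⟩
    rw [Set.mem_inter_iff, Rect.mem_toSet]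
    simp only [hseg, Set.mem_prod, Set.mem_singleton_iff, Set.mem_Icc]
    grind

theorem meetsLeftSide_iff {A F : Rect} (h : A.Sub F) : MeetsLeftSide A F ↔ A.x1 = F.x1 := by
  have := A.hx
  exact (meets_vseg_iff h _).trans (by grind [Rect.Sub])

theorem meetsRightSide_iff {A F : Rect} (h : A.Sub F) : MeetsRightSide A F ↔ A.x2 = F.x2 := by
  have := A.hx
  exact (meets_vseg_iff h _).trans (by grind [Rect.Sub])

theorem meetsBottomSide_iff {A F : Rect} (h : A.Sub F) : MeetsBottomSide A F ↔ A.y1 = F.y1 := by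
  have := A.hy
  exact (meets_hseg_iff h _).trans (by grind [Rect.Sub])

theorem meetsTopSide_iff {A F : Rect} (h : A.Sub F) : MeetsTopSide A F ↔ A.y2 = F.y2 := by
  have := A.hy
  exact (meets_hseg_iff h _).trans (by grind [Rect.Sub])

/-! ### Attaching a rectangle along a side -/

/-- The four sides of a rectangle along which another one can be attached. -/
inductive AttachSide
  | left
  | right
  | bottom
  | top

/-- `A` is attached to `F` along the full side `s` of `F`, and `G` is the resulting rectangle. -/
def Attach (s : AttachSide) (A F G : Rect) : Prop :=
  match s with
  | .left => A.x2 = F.x1 ∧ A.y1 = F.y1 ∧ A.y2 = F.y2 ∧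
      G.x1 = A.x1 ∧ G.x2 = F.x2 ∧ G.y1 = F.y1 ∧ G.y2 = F.y2
  | .right => A.x1 = F.x2 ∧ A.y1 = F.y1 ∧ A.y2 = F.y2 ∧
      G.x1 = F.x1 ∧ G.x2 = A.x2 ∧ G.y1 = F.y1 ∧ G.y2 = F.y2
  | .bottom => A.y2 = F.y1 ∧ A.x1 = F.x1 ∧ A.x2 = F.x2 ∧
      G.x1 = F.x1 ∧ G.x2 = F.x2 ∧ G.y1 = A.y1 ∧ G.y2 = F.y2
  | .top => A.y1 = F.y2 ∧ A.x1 = F.x1 ∧ A.x2 = F.x2 ∧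
      G.x1 = F.x1 ∧ G.x2 = F.x2 ∧ G.y1 = F.y1 ∧ G.y2 = A.y2

/-- If two rectangles with disjoint interiors have a rectangle as their union, then they share a
full side. -/
theorem exists_attach {A F G : Rect} (hsep : F.Sep A) (hU : F.toSet ∪ A.toSet = G.toSet) :
    ∃ s, Attach s A F G := by
  have hF : F.Sub G := (F.sub_iff G).1 (hU ▸ subset_union_left)
  have hA : A.Sub G := (A.sub_iff G).1 (hU ▸ subset_union_right)
  have key : ∀ x y, (G.x1 ≤ x ∧ x ≤ G.x2) ∧ G.y1 ≤ y ∧ y ≤ G.y2 →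
      ((F.x1 ≤ x ∧ x ≤ F.x2) ∧ F.y1 ≤ y ∧ y ≤ F.y2) ∨
      ((A.x1 ≤ x ∧ x ≤ A.x2) ∧ A.y1 ≤ y ∧ y ≤ A.y2) := by
    intro x y h
    rw [← Rect.mem_toSet, ← hU] at h
    simpa only [Set.mem_union, Rect.mem_toSet] using h
  have := A.hx
  have := A.hy
  have := F.hx
  have := F.hy
  have := G.hx
  have := G.hy
  have k1 := key G.x1 G.y1 (by grind)
  have k2 := key G.x1 G.y2 (by grind)
  have k3 := key G.x2 G.y1 (by grind)
  have k4 := key G.x2 G.y2 (by grind)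
  obtain ⟨f1, f2, f3, f4⟩ := hF
  obtain ⟨a1, a2, a3, a4⟩ := hA
  -- In each case, the midpoint of a putative gap between the rectangles would be uncovered.
  rcases hsep with h | h | h | h
  · have k5 := key ((F.x2 + A.x1) / 2) G.y1 (by grind)
    exact ⟨.right, by simp only [Attach]; grind⟩
  · have k5 := key ((A.x2 + F.x1) / 2) G.y1 (by grind)
    exact ⟨.left, by simp only [Attach]; grind⟩
  · have k5 := key G.x1 ((F.y2 + A.y1) / 2) (by grind)
    exact ⟨.top, by simp only [Attach]; grind⟩
  · have k5 := key G.x1 ((A.y2 + F.y1) / 2) (by grind)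
    exact ⟨.bottom, by simp only [Attach]; grind⟩

/-- A rectangle of any prescribed area can be attached along any side. -/
theorem exists_attach_area (s : AttachSide) (F : Rect) {w : ℝ} (hw : 0 < w) :
    ∃ A G, Attach s A F G ∧ A.area = w := by
  have hx := F.hx
  have hy := F.hy
  have hX : 0 < F.x2 - F.x1 := by linarith
  have hY : 0 < F.y2 - F.y1 := by linarith
  have hX' : 0 < w / (F.x2 - F.x1) := by positivity
  have hY' : 0 < w / (F.y2 - F.y1) := by positivity
  have eX : w / (F.x2 - F.x1) * (F.x2 - F.x1) = w := div_mul_cancel₀ _ hX.ne'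
  have eY : w / (F.y2 - F.y1) * (F.y2 - F.y1) = w := div_mul_cancel₀ _ hY.ne'
  cases s
  · exact ⟨⟨F.x1 - w / (F.y2 - F.y1), F.x1, F.y1, F.y2, by linarith, hy⟩,
      ⟨F.x1 - w / (F.y2 - F.y1), F.x2, F.y1, F.y2, by linarith, hy⟩, by simp [Attach],
      by simp only [Rect.area]; linarith⟩
  · exact ⟨⟨F.x2, F.x2 + w / (F.y2 - F.y1), F.y1, F.y2, by linarith, hy⟩,
      ⟨F.x1, F.x2 + w / (F.y2 - F.y1), F.y1, F.y2, by linarith, hy⟩, by simp [Attach],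
      by simp only [Rect.area]; linarith⟩
  · exact ⟨⟨F.x1, F.x2, F.y1 - w / (F.x2 - F.x1), F.y1, hx, by linarith⟩,
      ⟨F.x1, F.x2, F.y1 - w / (F.x2 - F.x1), F.y2, hx, by linarith⟩, by simp [Attach],
      by simp only [Rect.area]; linarith⟩
  · exact ⟨⟨F.x1, F.x2, F.y2, F.y2 + w / (F.x2 - F.x1), hx, by linarith⟩,
      ⟨F.x1, F.x2, F.y1, F.y2 + w / (F.x2 - F.x1), hx, by linarith⟩, by simp [Attach],
      by simp only [Rect.area]; linarith⟩

theorem Attach.union {s : AttachSide} {A F G : Rect} (h : Attach s A F G) :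
    F.toSet ∪ A.toSet = G.toSet := by
  have := A.hx
  have := A.hy
  have := F.hx
  have := F.hy
  ext ⟨x, y⟩
  rw [Set.mem_union, Rect.mem_toSet, Rect.mem_toSet, Rect.mem_toSet]
  cases s <;> simp only [Attach] at h <;> grind

theorem Attach.sub_left {s : AttachSide} {A F G : Rect} (h : Attach s A F G) : A.Sub G :=
  (A.sub_iff G).1 (h.union ▸ subset_union_right)

theorem Attach.sub_of_sub {s : AttachSide} {A B F G : Rect} (h : Attach s A F G) (hB : B.Sub F) :
    B.Sub G :=
  (B.sub_iff G).1 (((B.sub_iff F).2 hB).trans (h.union ▸ subset_union_left))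

theorem Attach.sep {s : AttachSide} {A B F G : Rect} (h : Attach s A F G) (hB : B.Sub F) :
    B.Sep A := by
  obtain ⟨h1, h2, h3, h4⟩ := hB
  unfold Rect.Sep
  cases s <;> simp only [Attach] at h <;> grind

theorem Rect.Sep.symm {A B : Rect} (h : A.Sep B) : B.Sep A := by
  unfold Rect.Sep at *
  tauto

/-! ### Transfer of the contact relations -/

/-- `A` in `F` and `A'` in `F'` lie on the same sides of their bounding rectangles. -/
def SameSides (A F A' F' : Rect) : Prop :=
  (A.x1 = F.x1 ↔ A'.x1 = F'.x1) ∧ (A.x2 = F.x2 ↔ A'.x2 = F'.x2) ∧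
  (A.y1 = F.y1 ↔ A'.y1 = F'.y1) ∧ (A.y2 = F.y2 ↔ A'.y2 = F'.y2)

theorem Attach.sameSides_new {s : AttachSide} {A F G A' F' G' : Rect}
    (h : Attach s A F G) (h' : Attach s A' F' G') : SameSides A G A' G' := by
  have := A.hx
  have := A.hy
  have := A'.hx
  have := A'.hy
  have := F.hx
  have := F.hy
  have := F'.hx
  have := F'.hy
  unfold SameSides
  cases s <;> simp only [Attach] at h h' <;> grind

theorem Attach.sameSides_old {s : AttachSide} {A B F G A' B' F' G' : Rect}
    (h : Attach s A F G) (h' : Attach s A' F' G') (hB : B.Sub F) (hB' : B'.Sub F')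
    (hs : SameSides B F B' F') : SameSides B G B' G' := by
  have := A.hx
  have := A.hy
  have := A'.hx
  have := A'.hy
  unfold SameSides at *
  unfold Rect.Sub at *
  cases s <;> simp only [Attach] at h h' <;> grind

/-- `A`, `B` have the same ordered contacts as `A'`, `B'`. -/
def SameAdj (A B A' B' : Rect) : Prop :=
  (LeftAdj A B ↔ LeftAdj A' B') ∧ (BelowAdj A B ↔ BelowAdj A' B')

theorem Attach.sameAdj {s : AttachSide} {A B F G A' B' F' G' : Rect}
    (h : Attach s A F G) (h' : Attach s A' F' G') (hB : B.Sub F) (hB' : B'.Sub F')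
    (hs : SameSides B F B' F') : SameAdj A B A' B' ∧ SameAdj B A B' A' := by
  have := A.hx
  have := A.hy
  have := A'.hx
  have := A'.hy
  have := B.hx
  have := B.hy
  have := B'.hx
  have := B'.hy
  simp only [SameAdj, leftAdj_iff, belowAdj_iff]
  unfold SameSides at hs
  unfold Rect.Sub at *
  cases s <;> simp only [Attach] at h h' <;> grind

theorem sameAdj_self (A A' : Rect) : SameAdj A A A' A' := by
  have := A.hx
  have := A.hy
  have := A'.hx
  have := A'.hy
  simp only [SameAdj, leftAdj_iff, belowAdj_iff]
  grind

/-! ### Realizations -/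

/-- The rectangles `R' i`, for `i ∈ P`, tile `F'`, have areas `w i`, and have the same contacts as
the rectangles `R i` in `F`. -/
structure Realizes {ι : Type*} (w : ι → ℝ) (P : Set ι) (R : ι → Rect) (F : Rect)
    (R' : ι → Rect) (F' : Rect) : Prop where
  sub : ∀ i ∈ P, (R i).Sub F
  union : (⋃ i ∈ P, (R' i).toSet) = F'.toSet
  sep : ∀ i ∈ P, ∀ j ∈ P, i ≠ j → (R' i).Sep (R' j)
  area : ∀ i ∈ P, (R' i).area = w i
  sides : ∀ i ∈ P, SameSides (R i) F (R' i) F'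
  adj : ∀ i ∈ P, ∀ j ∈ P, SameAdj (R i) (R j) (R' i) (R' j)

theorem Realizes.sub' {ι : Type*} {w : ι → ℝ} {P : Set ι} {R R' : ι → Rect} {F F' : Rect}
    (h : Realizes w P R F R' F') {i : ι} (hi : i ∈ P) : (R' i).Sub F' :=
  ((R' i).sub_iff F').1 (h.union ▸ subset_biUnion_of_mem (u := fun i => (R' i).toSet) hi)

theorem Realizes.insert {ι : Type*} [DecidableEq ι] {w : ι → ℝ} {P : Set ι} {R R' : ι → Rect}
    {F F' : Rect} (h : Realizes w P R F R' F') {k : ι} (hk : k ∉ P) {s : AttachSide}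
    {G A' G' : Rect} (hA : Attach s (R k) F G) (hA' : Attach s A' F' G') (hw : A'.area = w k) :
    Realizes w (insert k P) R G (Function.update R' k A') G' := by
  have ek : Function.update R' k A' k = A' := Function.update_self ..
  have eP : ∀ i ∈ P, Function.update R' k A' i = R' i := fun i hi =>
    Function.update_of_ne (ne_of_mem_of_not_mem hi hk) _ _
  constructor
  · rintro i (rfl | hi)
    · exact hA.sub_left
    · exact hA.sub_of_sub (h.sub i hi)
  · rw [Set.biUnion_insert, ek, ← hA'.union, ← h.union, Set.union_comm]
    congr 1
    exact Set.iUnion₂_congr fun i hi => by rw [eP i hi]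
  · rintro i (rfl | hi) j (rfl | hj) hij
    · exact absurd rfl hij
    · rw [ek, eP j hj]
      exact (hA'.sep (h.sub' hj)).symm
    · rw [ek, eP i hi]
      exact hA'.sep (h.sub' hi)
    · rw [eP i hi, eP j hj]
      exact h.sep i hi j hj hij
  · rintro i (rfl | hi)
    · rw [ek, hw]
    · rw [eP i hi, h.area i hi]
  · rintro i (rfl | hi)
    · rw [ek]
      exact hA.sameSides_new hA'
    · rw [eP i hi]
      exact hA.sameSides_old hA' (h.sub i hi) (h.sub' hi) (h.sides i hi)
  · rintro i (rfl | hi) j (rfl | hj)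
    · exact sameAdj_self _ _
    · rw [ek, eP j hj]
      exact (hA.sameAdj hA' (h.sub j hj) (h.sub' hj) (h.sides j hj)).1
    · rw [ek, eP i hi]
      exact (hA.sameAdj hA' (h.sub i hi) (h.sub' hi) (h.sides i hi)).2
    · rw [eP i hi, eP j hj]
      exact h.adj i hi j hj

/-- A rectangle whose interior is disjoint from those of the `R i` is separated by a line from
their union, when that union is a rectangle. -/
theorem sep_of_union {ι : Type*} {P : Set ι} {R : ι → Rect} {F A : Rect}
    (hU : (⋃ i ∈ P, (R i).toSet) = F.toSet) (hd : ∀ i ∈ P, (R i).Sep A) : F.Sep A := by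
  rw [← Rect.sep_iff, Set.eq_empty_iff_forall_notMem]
  rintro ⟨x, y⟩ ⟨hF, hA⟩
  have hF := interior_subset hF
  rw [← hU, Set.mem_iUnion₂] at hF
  obtain ⟨i, hi, hxi⟩ := hF
  rw [Rect.interior_toSet, Set.mem_prod, Set.mem_Ioo, Set.mem_Ioo] at hA
  rw [Rect.mem_toSet] at hxi
  have := hd i hi
  unfold Rect.Sep at this
  grind

theorem exists_realizes {n : ℕ} {R : Fin n → Rect} (h : SideAttachSeq R) {w : Fin n → ℝ}
    (hw : ∀ i, 0 < w i) (k : ℕ) (hk : k < n) (F : Rect)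
    (hF : (⋃ i ∈ Set.Iic (⟨k, hk⟩ : Fin n), (R i).toSet) = F.toSet) :
    ∃ R' F', Realizes w (Set.Iic (⟨k, hk⟩ : Fin n)) R F R' F' := by
  induction k generalizing F with
  | zero =>
    have hI : Set.Iic (⟨0, hk⟩ : Fin n) = {⟨0, hk⟩} := by
      ext i
      simp only [Set.mem_Iic, Set.mem_singleton_iff, Fin.le_def, Fin.ext_iff]
      omega
    rw [hI] at hF ⊢
    simp only [Set.mem_singleton_iff, Set.iUnion_iUnion_eq_left] at hF
    -- A single rectangle of height `1`.
    let A : Rect := ⟨0, w ⟨0, hk⟩, 0, 1, hw _, one_pos⟩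
    have h1 := (Rect.sub_iff _ _).1 hF.le
    have h2 := (Rect.sub_iff _ _).1 hF.ge
    refine ⟨fun _ => A, A, ?_, ?_, ?_, ?_, ?_, ?_⟩
    · rintro i rfl
      exact h1
    · simp
    · rintro i rfl j rfl hij
      exact absurd rfl hij
    · rintro i rfl
      simp [A, Rect.area]
    · rintro i rfl
      unfold SameSides
      unfold Rect.Sub at h1 h2
      grind
    · rintro i rfl j rfl
      exact sameAdj_self _ _
  | succ k ih =>
    have hk' : k < n := by omega
    obtain ⟨F₀, hF₀⟩ := h.2 ⟨k, hk'⟩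
    obtain ⟨R', F', hR⟩ := ih hk' F₀ hF₀
    have hI : Set.Iic (⟨k + 1, hk⟩ : Fin n) = insert ⟨k + 1, hk⟩ (Set.Iic ⟨k, hk'⟩) := by
      ext i
      simp only [Set.mem_Iic, Set.mem_insert_iff, Fin.le_def, Fin.ext_iff]
      omega
    have hn : (⟨k + 1, hk⟩ : Fin n) ∉ Set.Iic (⟨k, hk'⟩ : Fin n) := by
      simp [Fin.le_def]
    rw [hI, Set.biUnion_insert, hF₀, Set.union_comm] at hF
    have hsep : F₀.Sep (R ⟨k + 1, hk⟩) := sep_of_union hF₀ fun i hi =>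
      (Rect.sep_iff _ _).1 (h.1 (ne_of_mem_of_not_mem hi hn))
    obtain ⟨s, hs⟩ := exists_attach hsep hF
    obtain ⟨A', G', hA', hArea⟩ := exists_attach_area s F' (hw ⟨k + 1, hk⟩)
    rw [hI]
    exact ⟨_, _, hR.insert hn hs hA' hArea⟩

/-- The rectangular tiling arising from a side-attachment sequence is
area-universal. -/
theorem sideAttachSeq_areaUniversal
    {n : ℕ} (hn : 1 ≤ n) (T : Tiling (Fin n)) (h : SideAttachSeq T.R) :
    AreaUniversal T := by
  intro w hw
  have hk : n - 1 < n := by omega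
  have hI : ∀ i, i ∈ Set.Iic (⟨n - 1, hk⟩ : Fin n) := by
    intro i
    rw [Set.mem_Iic, Fin.le_def]
    show i.val ≤ n - 1
    omega
  have hU : ∀ S : Fin n → Set (ℝ × ℝ), (⋃ i ∈ Set.Iic (⟨n - 1, hk⟩ : Fin n), S i) = ⋃ i, S i :=
    fun S => Set.iUnion_congr fun i => by simp only [hI i, Set.iUnion_true]
  obtain ⟨R', F', hR⟩ := exists_realizes h hw (n - 1) hk T.F (by rw [hU, T.union])
  refine ⟨⟨R', F', fun i j hij => (Rect.sep_iff _ _).2 (hR.sep i (hI i) j (hI j) hij), ?_⟩,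
    ⟨?_, ?_, ?_, ?_, ?_, ?_⟩, fun i => hR.area i (hI i)⟩
  · rw [← hU, hR.union]
  · exact fun i j => (hR.adj i (hI i) j (hI j)).1
  · exact fun i j => (hR.adj i (hI i) j (hI j)).2
  · intro i
    rw [meetsLeftSide_iff (hR.sub i (hI i)), meetsLeftSide_iff (hR.sub' (hI i))]
    exact (hR.sides i (hI i)).1
  · intro i
    rw [meetsRightSide_iff (hR.sub i (hI i)), meetsRightSide_iff (hR.sub' (hI i))]
    exact (hR.sides i (hI i)).2.1
  · intro i
    rw [meetsTopSide_iff (hR.sub i (hI i)), meetsTopSide_iff (hR.sub' (hI i))]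
    exact (hR.sides i (hI i)).2.2.2
  · intro i
    rw [meetsBottomSide_iff (hR.sub i (hI i)), meetsBottomSide_iff (hR.sub' (hI i))]
    exact (hR.sides i (hI i)).2.2.1
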